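/- Let μ, ν be probability measures on ℝ^d and σ > 0, with γ_σ = N(0, σ²·I_d). Then JS(μ ∗ γ_σ ‖ ν ∗ γ_σ) = 0 if and only if μ = ν, where JS denotes the Jensen–Shannon divergence. -/

import Mathlib

open MeasureTheory Real
open scoped ENNReal Classical

/-- The isotropic centered Gaussian measure `N(0, σ²·I_d)` on `ℝ^d`, given by its
density `(2πσ²)^(-d/2) · exp(-‖x‖²/(2σ²))` with respect to Lebesgue measure. -/
noncomputable def gaussianIso (d : ℕ) (σ : ℝ) : Measure (EuclideanSpace ℝ (Fin d)) :=
  volume.withDensity fun x =>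
    ENNReal.ofReal ((2 * π * σ ^ 2) ^ (-(d : ℝ) / 2) * Real.exp (-‖x‖ ^ 2 / (2 * σ ^ 2)))

/-- The Kullback–Leibler divergence `KL(P‖Q) = ∫ log (dP/dQ) dP` when `P ≪ Q`
(and the integral makes sense), and `+∞` otherwise. -/
noncomputable def KL {α : Type*} [MeasurableSpace α] (P Q : Measure α) : ℝ≥0∞ :=
  if P ≪ Q ∧ Integrable (fun x => Real.log (P.rnDeriv Q x).toReal) P then
    ENNReal.ofReal (∫ x, Real.log (P.rnDeriv Q x).toReal ∂P) else ⊤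

/-- The Jensen–Shannon divergence `JS(P‖Q) = ½·KL(P‖m) + ½·KL(Q‖m)` where
`m = ½·P + ½·Q` is the equal-weight mixture. -/
noncomputable def JS {α : Type*} [MeasurableSpace α] (P Q : Measure α) : ℝ≥0∞ :=
  2⁻¹ * KL P ((2 : ℝ≥0∞)⁻¹ • P + (2 : ℝ≥0∞)⁻¹ • Q) +
    2⁻¹ * KL Q ((2 : ℝ≥0∞)⁻¹ • P + (2 : ℝ≥0∞)⁻¹ • Q)

lemma KL_eq_klDiv_aux {α : Type*} [MeasurableSpace α] (P Q : Measure α)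
    (h : P Set.univ = Q Set.univ) : KL P Q = InformationTheory.klDiv P Q := by
  rw [InformationTheory.klDiv_def]
  unfold KL
  have : Q.real Set.univ = P.real Set.univ := by simp [Measure.real, h]
  rw [this]
  simp only [add_sub_cancel_right]
  rfl

lemma JS_eq_zero_aux {α : Type*} [MeasurableSpace α] (P Q : Measure α)
    [IsFiniteMeasure P] [IsFiniteMeasure Q]
    (h : P Set.univ = Q Set.univ) : JS P Q = 0 ↔ P = Q := by
  have h2 : (2 : ℝ≥0∞)⁻¹ ≠ ∞ := by simp
  have := Measure.smul_finite P h2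
  have := Measure.smul_finite Q h2
  have hm : P Set.univ = ((2 : ℝ≥0∞)⁻¹ • P + (2 : ℝ≥0∞)⁻¹ • Q) Set.univ := by
    simp only [Measure.add_apply, Measure.smul_apply, smul_eq_mul, ← h]
    rw [← add_mul, ENNReal.inv_two_add_inv_two, one_mul]
  unfold JS
  rw [KL_eq_klDiv_aux _ _ hm, KL_eq_klDiv_aux _ _ (h ▸ hm)]
  constructor
  · intro h0
    have h1 := (add_eq_zero.1 h0).1
    have h1' := (add_eq_zero.1 h0).2
    simp only [mul_eq_zero, ENNReal.inv_eq_zero, ENNReal.ofNat_ne_top, false_or,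
      InformationTheory.klDiv_eq_zero_iff] at h1 h1'
    exact h1.trans h1'.symm
  · rintro rfl
    have : (2 : ℝ≥0∞)⁻¹ • P + (2 : ℝ≥0∞)⁻¹ • P = P := by
      rw [← add_smul, ENNReal.inv_two_add_inv_two, one_smul]
    rw [this]
    simp

lemma gaussianIso_finite_aux (d : ℕ) {σ : ℝ} (hσ : 0 < σ) :
    IsFiniteMeasure (gaussianIso d σ) := by
  unfold gaussianIso
  apply isFiniteMeasure_withDensity_ofReal
  apply Integrable.hasFiniteIntegral
  apply Integrable.const_mul
  have hb : 0 < (((1 / (2 * σ ^ 2) : ℝ)) : ℂ).re := by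
    rw [Complex.ofReal_re]; positivity
  have := (GaussianFourier.integrable_cexp_neg_mul_sq_norm_add hb 0
    (0 : EuclideanSpace ℝ (Fin d))).norm
  refine this.congr (Filter.Eventually.of_forall fun x => ?_)
  simp only [Complex.norm_exp]
  congr 1
  rw [zero_mul, add_zero, ← Complex.ofReal_pow, ← Complex.ofReal_neg, ← Complex.ofReal_mul,
    Complex.ofReal_re]
  ring

lemma gaussianIso_charFun_aux (d : ℕ) {σ : ℝ} (hσ : 0 < σ) (t : EuclideanSpace ℝ (Fin d)) :
    charFun (gaussianIso d σ) t ≠ 0 := by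
  have hb0 : 0 < 1 / (2 * σ ^ 2) := by positivity
  have hb : 0 < (((1 / (2 * σ ^ 2) : ℝ)) : ℂ).re := by
    rw [Complex.ofReal_re]; positivity
  have key := GaussianFourier.integral_cexp_neg_mul_sq_norm_add hb Complex.I t
  rw [charFun_apply]
  unfold gaussianIso
  rw [integral_withDensity_eq_integral_toReal_smul (by fun_prop) (by simp)]
  have hC : 0 < (2 * π * σ ^ 2) ^ (-(d : ℝ) / 2) := by positivity
  set C : ℝ := (2 * π * σ ^ 2) ^ (-(d : ℝ) / 2)
  have : ∀ x : EuclideanSpace ℝ (Fin d),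
      (ENNReal.ofReal (C * Real.exp (-‖x‖ ^ 2 / (2 * σ ^ 2)))).toReal •
        Complex.exp (inner ℝ x t * Complex.I) =
      (C : ℂ) * Complex.exp (-((1 / (2 * σ ^ 2) : ℝ) : ℂ) * ‖x‖ ^ 2
        + Complex.I * inner ℝ t x) := by
    intro x
    rw [ENNReal.toReal_ofReal (by positivity), Complex.real_smul, Complex.ofReal_mul,
      Complex.ofReal_exp, mul_assoc, ← Complex.exp_add, real_inner_comm]
    congr 2
    push_cast
    ring
  simp_rw [this]
  rw [integral_const_mul, key]
  refine mul_ne_zero (by exact_mod_cast hC.ne') (mul_ne_zero ?_ (Complex.exp_ne_zero _))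
  rw [Ne, Complex.cpow_eq_zero_iff, not_and_or]
  left
  refine div_ne_zero (by exact_mod_cast pi_ne_zero) (by exact_mod_cast hb0.ne')

/-- Validity of the spread (single-kernel diffusive) JS divergence:
`JS(μ ∗ γ_σ ‖ ν ∗ γ_σ) = 0` iff `μ = ν`. -/
theorem spreadJS_eq_zero_iff {d : ℕ} {σ : ℝ} (hσ : 0 < σ)
    (μ ν : Measure (EuclideanSpace ℝ (Fin d)))
    [IsProbabilityMeasure μ] [IsProbabilityMeasure ν] :
    JS (μ.conv (gaussianIso d σ)) (ν.conv (gaussianIso d σ)) = 0 ↔ μ = ν := by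
  have := gaussianIso_finite_aux d hσ
  have hu : ∀ ρ : Measure (EuclideanSpace ℝ (Fin d)), IsProbabilityMeasure ρ →
      (ρ.conv (gaussianIso d σ)) Set.univ = gaussianIso d σ Set.univ := by
    intro ρ hρ
    rw [Measure.conv, Measure.map_apply (by fun_prop) MeasurableSet.univ, Set.preimage_univ,
      ← Set.univ_prod_univ, Measure.prod_prod, measure_univ, one_mul]
  rw [JS_eq_zero_aux _ _ ((hu μ inferInstance).trans (hu ν inferInstance).symm)]
  refine ⟨fun h => Measure.ext_of_charFun (funext fun t => ?_), fun h => by rw [h]⟩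
  have h1 := congrArg (fun ρ => charFun ρ t) h
  simp only [charFun_conv] at h1
  exact mul_right_cancel₀ (gaussianIso_charFun_aux d hσ t) h1
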